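/- Let W be the ℂ-linear span in End_ℂ(S) of {L⁽ʳ⁾(n) : r ∈ ℕ, n ∈ ℤ} ∪ {id_S}, and let 𝒟⁺ ⊆ End_ℂ(ℂ[t,t⁻¹]) be the ℂ-linear span of {Dʳ∘M_{tⁿ}∘D∘Dʳ : r ∈ ℕ, n ∈ ℤ}. Then W is a Lie subalgebra of End_ℂ(S), and there is a surjective ℂ-linear Lie algebra homomorphism π : W → 𝒟⁺ with π(L⁽ʳ⁾(n)) = (−1)^{r+1}·Dʳ∘M_{tⁿ}∘D∘Dʳ for all r ∈ ℕ, n ∈ ℤ and kernel exactly ℂ·id_S; that is, W is a one-dimensional central extension of 𝒟⁺. -/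

import Mathlib

/-!
Extend `h` linearly to Laurent polynomials by `h(tᵏ) = h(k)`, and consider the pairs `(w, d)` of
an operator `w` on `S` and a differential operator `d = ∑ₙ tⁿ Pₙ(D)` with `[w, h(q)] = h(d q)` for
all `q`. By the Jacobi identity they form a Lie algebra, which contains `(id, 0)` and the pairs
`(L⁽ʳ⁾(n), (-1)ʳ⁺¹ Dʳ tⁿ D Dʳ)`. This Lie algebra is the graph of `π`:

* an operator commuting with all `h(k)` is a scalar, so `(w, 0)` occurs exactly for `w ∈ ℂ · id`;
* `w` determines `d`: as `h(0) = 0` is the only degeneracy of `h`, `[w, h(k)]` determines each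
  `Pₙ(k)` for `k ≠ -n`, hence the polynomial `Pₙ`;
* since `[h(a), h(b)]` is a scalar, `[[w, h(a)], h(b)] + [h(a), [w, h(b)]] = 0`, which amounts to
  `(X + n) Pₙ(X) = -X Pₙ(-n - X)`. The solutions of this equation are `X` times the polynomials in
  `X (X + n)`, and `tⁿ D (D (D + n))ʳ = Dʳ tⁿ D Dʳ`, so `d` lies in `𝒟⁺`.
-/

noncomputable section

/-- The polynomial algebra `S = ℂ[a₁,a₂,a₃,…]`, with variables indexed by `ℕ+`. -/
abbrev SS : Type := MvPolynomial ℕ+ ℂ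

/-- The Heisenberg operators `h(n)` on `S`: for `n < 0`, multiplication by `a₋ₙ`;
for `n > 0`, `n·∂/∂aₙ`; and `h(0) = 0`. -/
noncomputable def hOp (n : ℤ) : Module.End ℂ SS :=
  if _h1 : 0 < n then
    (n : ℂ) • (MvPolynomial.pderiv (R := ℂ) (⟨n.toNat, by omega⟩ : ℕ+)).toLinearMap
  else if _h2 : n < 0 then
    LinearMap.mulLeft ℂ (MvPolynomial.X (⟨(-n).toNat, by omega⟩ : ℕ+))
  else 0

/-- The normally ordered product `:h(i)h(j):`  (equal to `h(i)∘h(j)` if `i ≤ j`,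
and to `h(j)∘h(i)` if `i > j`; note `f * g` is composition in `Module.End`). -/
noncomputable def nord (i j : ℤ) : Module.End ℂ SS :=
  if i ≤ j then hOp i * hOp j else hOp j * hOp i

open Polynomial
open scoped LaurentPolynomial
open LaurentPolynomial (T)

lemma exists_linearMap_forall_eq_iff_mem {R E F : Type*} [Ring R] [AddCommGroup E] [Module R E]
    [AddCommGroup F] [Module R F] {g : Submodule R (E × F)} (hg : ∀ x ∈ g, x.1 = 0 → x.2 = 0) :
    ∃ π : g.map (LinearMap.fst R E F) →ₗ[R] F, ∀ v y, π v = y ↔ ((v : E), y) ∈ g := by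
  refine ⟨g.toLinearPMap.toFun, fun v y => ⟨?_, fun h => ?_⟩⟩
  · rintro rfl
    exact g.mem_graph_toLinearPMap hg v
  · exact (g.existsUnique_from_graph (fun {x} => hg x) v.2).unique
      (g.mem_graph_toLinearPMap hg v) h

section Polynomials

lemma pderiv_comm {R σ : Type*} [CommRing R] (i j : σ) (p : MvPolynomial σ R) :
    MvPolynomial.pderiv i (MvPolynomial.pderiv j p) =
      MvPolynomial.pderiv j (MvPolynomial.pderiv i p) := by
  classical
  have h : ⁅MvPolynomial.pderiv (R := R) i, MvPolynomial.pderiv j⁆ = 0 :=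
    MvPolynomial.derivation_ext fun k => by
      rw [Derivation.commutator_apply]
      simp [MvPolynomial.pderiv_X, Pi.single_apply, apply_ite]
  exact sub_eq_zero.mp (congrArg (fun D : Derivation R _ _ => D p) h)

lemma notMem_vars_of_pderiv_eq_zero {R σ : Type*} [CommSemiring R] [NoZeroDivisors R] [CharZero R]
    {i : σ} {p : MvPolynomial σ R} (hp : MvPolynomial.pderiv i p = 0) : i ∉ p.vars := by
  classical
  intro hi
  obtain ⟨m, hm, him⟩ := (MvPolynomial.mem_vars_iff_mem_support i).mp hi
  have hle : Finsupp.single i 1 ≤ m :=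
    Finsupp.single_le_iff.mpr (Nat.one_le_iff_ne_zero.mpr (Finsupp.mem_support_iff.mp him))
  have h := congrArg (MvPolynomial.coeff (m - Finsupp.single i 1)) hp
  rw [MvPolynomial.coeff_pderiv, tsub_add_cancel_of_le hle, MvPolynomial.coeff_zero] at h
  exact (mul_ne_zero (MvPolynomial.mem_support_iff.mp hm) (Nat.cast_add_one_ne_zero _)) h

variable {R A : Type*} [CommRing R] [CommRing A] [Algebra R A]

-- Power sums satisfy `sₘ₊₂ = (x + y) sₘ₊₁ - x y sₘ`.
lemma pow_add_pow_mem {S : Subalgebra R A} {x y : A} (hadd : x + y ∈ S) (hmul : x * y ∈ S)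
    (m : ℕ) : x ^ m + y ^ m ∈ S := by
  induction m using Nat.twoStepInduction with
  | zero => simpa using S.add_mem S.one_mem S.one_mem
  | one => simpa using hadd
  | more m h₀ h₁ =>
    convert S.sub_mem (S.mul_mem hadd h₁) (S.mul_mem hmul h₀) using 1
    ring

lemma aeval_add_aeval_mem {S : Subalgebra R A} {x y : A} (hadd : x + y ∈ S) (hmul : x * y ∈ S)
    (p : R[X]) : aeval x p + aeval y p ∈ S := by
  induction p using Polynomial.induction_on' with
  | add p q hp hq =>
    rw [map_add, map_add, add_add_add_comm]
    exact S.add_mem hp hq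
  | monomial m a =>
    rw [aeval_monomial, aeval_monomial, ← mul_add, ← Algebra.smul_def]
    exact S.smul_mem (pow_add_pow_mem hadd hmul m) a

lemma exists_eq_comp_of_comp_neg_sub_eq [Invertible (2 : R)] {c : R} {p : R[X]}
    (hp : p.comp (-C c - X) = p) : ∃ q : R[X], p = q.comp (X * (X + C c)) := by
  set S := (aeval (R := R) (X * (X + C c))).range
  have hadd : X + (-C c - X) ∈ S := ⟨-C c, by simp⟩
  have hmul : X * (-C c - X) ∈ S := ⟨-X, by
    simp only [AlgHom.toRingHom_eq_coe, RingHom.coe_coe, map_neg, aeval_X]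
    ring⟩
  obtain ⟨q, hq⟩ := (AlgHom.mem_range _).mp <|
    S.smul_mem (aeval_add_aeval_mem hadd hmul p) (⅟2 : R)
  refine ⟨q, ?_⟩
  rw [comp_eq_aeval] at hp ⊢
  rw [hq, hp, aeval_X_left_apply, ← two_smul R p, invOf_smul_smul]

variable [IsDomain R]

lemma eq_of_forall_eval_intCast_eq [CharZero R] {p q : R[X]}
    (h : ∀ k : ℤ, p.eval (k : R) = q.eval (k : R)) : p = q :=
  eq_of_infinite_eval_eq p q <|
    (Set.infinite_range_of_injective Int.cast_injective).mono (Set.range_subset_iff.mpr h)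

-- Both sides of `h` are invariant under `X ↦ -c - X` and vanish at `0`, so they are
-- `X (X + c)` times a polynomial in `X (X + c)`.
lemma exists_eq_X_mul_comp [Invertible (2 : R)] {c : R} {p : R[X]}
    (h : (X + C c) * p = -(X * p.comp (-C c - X))) :
    ∃ q : R[X], p = X * q.comp (X * (X + C c)) := by
  have hsymm : ((X + C c) * p).comp (-C c - X) = (X + C c) * p := by
    rw [mul_comp, add_comp, X_comp, C_comp, h]
    ring
  obtain ⟨q, hq⟩ := exists_eq_comp_of_comp_neg_sub_eq hsymm
  have hq₀ : q.eval 0 = 0 := by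
    have h₀ := congrArg (eval 0) (hq.symm.trans h)
    simpa [eval_comp] using h₀
  obtain ⟨q', rfl⟩ := X_dvd_iff.mpr (coeff_zero_eq_eval_zero q ▸ hq₀)
  refine ⟨q', mul_left_cancel₀ (X_add_C_ne_zero c) ?_⟩
  rw [hq, mul_comp, X_comp]
  ring

end Polynomials

section DifferentialOperators

lemma laurent_hom_ext {R M : Type*} [Semiring R] [AddCommMonoid M] [Module R M]
    {φ ψ : R[T;T⁻¹] →ₗ[R] M}
    (h : ∀ k : ℤ, φ (T k) = ψ (T k)) : φ = ψ :=
  (AddMonoidAlgebra.basis ℤ R).ext h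

variable {R : Type*} [CommRing R]

variable (R) in
/-- The Euler operator `D = t d/dt` on Laurent polynomials. -/
def euler : Module.End R R[T;T⁻¹] :=
  (AddMonoidAlgebra.basis ℤ R).constr R fun k => (k : R) • T k

@[simp]
lemma euler_T (k : ℤ) : euler R (T k) = (k : R) • T k :=
  (AddMonoidAlgebra.basis ℤ R).constr_basis R _ k

/-- The differential operator `tⁿ p(D)`, linear in the polynomial `p`. -/
def diffOp (n : ℤ) : R[X] →ₗ[R] Module.End R R[T;T⁻¹] :=
  LinearMap.mulLeft R (LinearMap.mulLeft R (T n)) ∘ₗ (aeval (euler R)).toLinearMap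

@[simp]
lemma diffOp_T (n : ℤ) (p : R[X]) (k : ℤ) :
    diffOp n p (T k) = p.eval (k : R) • T (n + k) := by
  change T n * aeval (euler R) p (T k) = _
  rw [Module.End.aeval_apply_of_mem_apply_eq_smul (euler_T k), mul_smul_comm,
    ← LaurentPolynomial.T_add]

lemma diffOp_mul_diffOp (m n : ℤ) (p q : R[X]) :
    diffOp m p * diffOp n q = diffOp (m + n) (p.comp (X + C (n : R)) * q) :=
  laurent_hom_ext fun k => by
    simp only [Module.End.mul_apply, diffOp_T, map_smul, smul_smul, eval_mul, eval_comp, eval_add,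
      eval_X, eval_C]
    rw [add_assoc, Int.cast_add, add_comm (n : R), mul_comm]

/-- The operator `∑ₙ tⁿ Pₙ(D)` attached to a finitely supported family of polynomials. -/
def diffOpSum : (ℤ →₀ R[X]) →ₗ[R] Module.End R R[T;T⁻¹] :=
  Finsupp.lsum R diffOp

@[simp]
lemma diffOpSum_single (n : ℤ) (p : R[X]) : diffOpSum (Finsupp.single n p) = diffOp n p :=
  Finsupp.lsum_single R diffOp n p

lemma diffOpSum_mul_mem_range (P Q : ℤ →₀ R[X]) :
    diffOpSum P * diffOpSum Q ∈ LinearMap.range (diffOpSum (R := R)) := by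
  induction P using Finsupp.induction_linear with
  | zero => simp
  | add P P' hP hP' => simpa [add_mul] using Submodule.add_mem _ hP hP'
  | single m p =>
    induction Q using Finsupp.induction_linear with
    | zero => simp
    | add Q Q' hQ hQ' => simpa [mul_add] using Submodule.add_mem _ hQ hQ'
    | single n q =>
      refine ⟨.single (m + n) (p.comp (X + C (n : R)) * q), ?_⟩
      rw [diffOpSum_single, diffOpSum_single, diffOpSum_single, diffOp_mul_diffOp]

lemma one_mem_range_diffOpSum : 1 ∈ LinearMap.range (diffOpSum (R := R)) :=
  ⟨.single 0 1, laurent_hom_ext fun k => by simp⟩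

lemma coeff_diffOpSum_T (P : ℤ →₀ R[X]) (n k : ℤ) :
    (diffOpSum P (T k)).coeff (n + k) = (P n).eval (k : R) := by
  induction P using Finsupp.induction_linear with
  | zero => simp
  | add P Q hP hQ => simp [hP, hQ]
  | single m p =>
    rw [diffOpSum_single, diffOp_T]
    by_cases h : m = n <;> simp [h]

variable (R) in
/-- The algebra of differential operators with coefficients in `R[t, t⁻¹]`, generated by `D` and
the multiplications by `tⁿ`. -/
def diffOps : Subalgebra R (Module.End R R[T;T⁻¹]) :=
  (LinearMap.range diffOpSum).toSubalgebra one_mem_range_diffOpSum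
    (by rintro _ _ ⟨P, rfl⟩ ⟨Q, rfl⟩; exact diffOpSum_mul_mem_range P Q)

lemma diffOp_mem_diffOps (n : ℤ) (p : R[X]) : diffOp n p ∈ diffOps R :=
  ⟨.single n p, diffOpSum_single n p⟩

/-- The generator `Dʳ tⁿ D Dʳ` of `𝒟⁺`. -/
def dplusGen (r : ℕ) (n : ℤ) : Module.End R R[T;T⁻¹] :=
  euler R ^ r * (LinearMap.mulLeft R (T n) * euler R) * euler R ^ r

lemma euler_pow_T (r : ℕ) (k : ℤ) : (euler R ^ r) (T k) = (k : R) ^ r • T k := by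
  simpa using Module.End.aeval_apply_of_mem_apply_eq_smul (p := X ^ r) (euler_T (R := R) k)

lemma dplusGen_eq_diffOp (r : ℕ) (n : ℤ) :
    dplusGen r n = diffOp n (X * (X * (X + C (n : R))) ^ r) :=
  laurent_hom_ext fun k => by
    simp only [dplusGen, Module.End.mul_apply, euler_pow_T, map_smul, euler_T,
      LinearMap.mulLeft_apply, ← LaurentPolynomial.T_add, smul_smul, diffOp_T, eval_mul, eval_pow,
      eval_add, eval_X, eval_C, mul_pow]
    push_cast
    congr 1
    ring

variable (R) in
/-- The space `𝒟⁺`, the span of the operators `Dʳ tⁿ D Dʳ`. -/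
def Dplus : Submodule R (Module.End R R[T;T⁻¹]) :=
  Submodule.span R {d | ∃ r n, d = dplusGen r n}

lemma diffOp_X_mul_comp_mem_Dplus (n : ℤ) (q : R[X]) :
    diffOp n (X * q.comp (X * (X + C (n : R)))) ∈ Dplus R := by
  induction q using Polynomial.induction_on' with
  | add p q hp hq => simpa [mul_add] using Submodule.add_mem _ hp hq
  | monomial r a =>
    rw [monomial_comp, mul_left_comm, ← smul_eq_C_mul, map_smul, ← dplusGen_eq_diffOp]
    exact Submodule.smul_mem _ a (Submodule.subset_span ⟨r, n, rfl⟩)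

end DifferentialOperators

section Heisenberg

attribute [local instance] LieRing.ofAssociativeRing

lemma int_eq_zero_or_pnat_or_neg_pnat (n : ℤ) :
    n = 0 ∨ (∃ i : ℕ+, n = (i : ℕ)) ∨ ∃ i : ℕ+, n = -(i : ℕ) := by
  obtain ⟨i, rfl | rfl⟩ := n.eq_nat_or_neg <;> rcases i.eq_zero_or_pos with rfl | hi
  · exact .inl rfl
  · exact .inr (.inl ⟨⟨i, hi⟩, rfl⟩)
  · exact .inl rfl
  · exact .inr (.inr ⟨⟨i, hi⟩, rfl⟩)

lemma hOp_zero : hOp 0 = 0 := by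
  simp [hOp]

lemma hOp_coe (i : ℕ+) (p : SS) : hOp (i : ℕ) p = (i : ℂ) • MvPolynomial.pderiv i p := by
  have hi : (0 : ℤ) < (i : ℕ) := by exact_mod_cast i.pos
  have h : hOp (i : ℕ) = (i : ℂ) • (MvPolynomial.pderiv i).toLinearMap := dif_pos hi
  rw [h]
  rfl

lemma hOp_neg_coe (i : ℕ+) (p : SS) : hOp (-(i : ℕ)) p = MvPolynomial.X i * p := by
  have hi : -((i : ℕ) : ℤ) < 0 := neg_neg_of_pos (by exact_mod_cast i.pos)
  have h : hOp (-(i : ℕ)) =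
      LinearMap.mulLeft ℂ (MvPolynomial.X ⟨(- -((i : ℕ) : ℤ)).toNat, by omega⟩) :=
    (dif_neg hi.not_gt).trans (dif_pos hi)
  rw [h, LinearMap.mulLeft_apply]
  simp only [neg_neg]
  rfl

lemma lie_hOp_coe_neg_coe (i j : ℕ+) :
    ⁅hOp (i : ℕ), hOp (-(j : ℕ))⁆ = (if i = j then (i : ℂ) else 0) • 1 := by
  refine LinearMap.ext fun p => ?_
  rcases eq_or_ne i j with rfl | hij
  · simp [LieRing.of_associative_ring_bracket, hOp_coe, hOp_neg_coe]
  · simp [LieRing.of_associative_ring_bracket, hOp_coe, hOp_neg_coe, hij,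
      MvPolynomial.pderiv_X_of_ne hij.symm]

lemma lie_hOp (m n : ℤ) : ⁅hOp m, hOp n⁆ = (if m + n = 0 then (m : ℂ) else 0) • 1 := by
  rcases int_eq_zero_or_pnat_or_neg_pnat m with rfl | ⟨i, rfl⟩ | ⟨i, rfl⟩
  · simp [hOp_zero]
  all_goals
    have hi := i.pos
    rcases int_eq_zero_or_pnat_or_neg_pnat n with rfl | ⟨j, rfl⟩ | ⟨j, rfl⟩
  · simp [hOp_zero]
  · rw [if_neg (by omega), zero_smul]
    refine LinearMap.ext fun p => ?_
    simp [Ring.lie_def, hOp_coe, pderiv_comm i j, smul_comm (i : ℂ)]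
  · simp [lie_hOp_coe_neg_coe, add_neg_eq_zero]
  · simp [hOp_zero]
  · rw [← lie_skew, lie_hOp_coe_neg_coe]
    rcases eq_or_ne i j with rfl | hij
    · exact LinearMap.ext fun p => by simp
    · simp [hij.symm, neg_add_eq_zero, hij]
  · rw [if_neg (by omega), zero_smul]
    refine LinearMap.ext fun p => ?_
    simp [Ring.lie_def, hOp_neg_coe, mul_left_comm]

lemma exists_forall_lt_hOp_apply_eq_zero (p : SS) : ∃ N : ℤ, ∀ m, N < m → hOp m p = 0 := by
  refine ⟨(p.vars.sup (fun i => (i : ℕ)) : ℕ), fun m hm => ?_⟩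
  obtain ⟨m, rfl⟩ := Int.eq_ofNat_of_zero_le (by omega : 0 ≤ m)
  lift m to ℕ+ using by omega
  rw [hOp_coe, MvPolynomial.pderiv_eq_zero_of_notMem_vars, smul_zero]
  intro hi
  have := Finset.le_sup (f := fun i : ℕ+ => (i : ℕ)) hi
  omega

lemma eq_smul_one_of_forall_lie_hOp_eq_zero {w : Module.End ℂ SS} (hw : ∀ k, ⁅w, hOp k⁆ = 0) :
    ∃ c : ℂ, w = c • 1 := by
  have hcomm (k : ℤ) (p : SS) : w (hOp k p) = hOp k (w p) :=
    sub_eq_zero.mp (congrArg (fun g : Module.End ℂ SS => g p) (hw k))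
  have hX (i : ℕ+) (p : SS) : w (p * MvPolynomial.X i) = w p * MvPolynomial.X i := by
    rw [mul_comm, ← hOp_neg_coe, hcomm, hOp_neg_coe, mul_comm]
  have hpderiv (i : ℕ+) : MvPolynomial.pderiv i (w 1) = 0 := by
    simpa [hOp_coe] using (hcomm (i : ℕ) 1).symm
  obtain ⟨c, hc⟩ : ∃ c, w 1 = MvPolynomial.C c := ⟨_,
    MvPolynomial.vars_eq_empty_iff_eq_C.mp <|
      Finset.eq_empty_of_forall_notMem fun i => notMem_vars_of_pderiv_eq_zero (hpderiv i)⟩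
  refine ⟨c, LinearMap.ext fun p => ?_⟩
  induction p using MvPolynomial.induction_on with
  | C a =>
    rw [← mul_one (MvPolynomial.C a), ← MvPolynomial.smul_eq_C_mul, map_smul, hc]
    simp [MvPolynomial.smul_eq_C_mul, mul_comm]
  | add p q hp hq => rw [map_add, map_add, hp, hq]
  | mul_X p i hp => simp [hX, hp]

/-- The linear map `tᵏ ↦ h(k)` from Laurent polynomials to Heisenberg operators. Its kernel consists
of the constants, as `h(0) = 0`. -/
def heis : ℂ[T;T⁻¹] →ₗ[ℂ] Module.End ℂ SS :=
  (AddMonoidAlgebra.basis ℤ ℂ).constr ℂ hOp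

@[simp]
lemma heis_T (k : ℤ) : heis (T k) = hOp k :=
  (AddMonoidAlgebra.basis ℤ ℂ).constr_basis ℂ hOp k

lemma lie_heis_hOp_neg (q : ℂ[T;T⁻¹]) (l : ℤ) :
    ⁅heis q, hOp (-l)⁆ = ((l : ℂ) * q.coeff l) • (1 : Module.End ℂ SS) := by
  induction q using LaurentPolynomial.induction_on' with
  | add p q hp hq => simp [add_lie, hp, hq, mul_add, add_smul]
  | C_mul_T k a =>
    rw [← LaurentPolynomial.smul_eq_C_mul, map_smul, heis_T]
    refine (smul_lie a (hOp k) (hOp (-l))).trans ?_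
    rw [lie_hOp]
    rcases eq_or_ne k l with rfl | h
    · simp [smul_smul, mul_comm]
    · simp [h, add_neg_eq_zero]

end Heisenberg

section QuadraticOperators

attribute [local instance] LieRing.ofAssociativeRing

lemma finite_support_smul_nord_apply (c : ℤ → ℂ) (n : ℤ) (p : SS) :
    (Function.support fun j => c j • nord j (n - j) p).Finite := by
  obtain ⟨N, hN⟩ := exists_forall_lt_hOp_apply_eq_zero p
  refine (Set.finite_Icc (n - N) N).subset fun j hj => ?_
  by_contra hj'
  refine hj ?_
  rw [Set.mem_Icc] at hj'
  change c j • nord j (n - j) p = 0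
  unfold nord
  split_ifs with h
  · simp [hN (n - j) (by omega)]
  · simp [hN j (by omega)]

lemma mul_lie_hOp (i j k : ℤ) :
    ⁅hOp i * hOp j, hOp k⁆ =
      (if i + k = 0 then (i : ℂ) else 0) • hOp j + (if j + k = 0 then (j : ℂ) else 0) • hOp i := by
  have leibniz : ⁅hOp i * hOp j, hOp k⁆ = ⁅hOp i, hOp k⁆ * hOp j + hOp i * ⁅hOp j, hOp k⁆ := by
    simp only [Ring.lie_def, sub_mul, mul_sub, mul_assoc]
    abel
  rw [leibniz, lie_hOp, lie_hOp]
  exact LinearMap.ext fun p => by simp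

lemma lie_nord_hOp (i j k : ℤ) :
    ⁅nord i j, hOp k⁆ =
      (if i + k = 0 then (i : ℂ) else 0) • hOp j + (if j + k = 0 then (j : ℂ) else 0) • hOp i := by
  unfold nord
  rcases le_or_gt i j with h | h
  · rw [if_pos h, mul_lie_hOp]
  · rw [if_neg h.not_ge, mul_lie_hOp, add_comm]

/-- The operator `½ ∑ⱼ c(j) :h(j)h(n-j):` on `S`, a sum which is finite on each polynomial. -/
def quadOp (c : ℤ → ℂ) (n : ℤ) : Module.End ℂ SS where
  toFun p := (1 / 2 : ℂ) • ∑ᶠ j, c j • nord j (n - j) p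
  map_add' p q := by
    simp only [map_add, smul_add]
    rw [finsum_add_distrib (finite_support_smul_nord_apply c n p)
      (finite_support_smul_nord_apply c n q), smul_add]
  map_smul' a p := by
    simp only [map_smul, smul_comm _ a]
    rw [← smul_finsum' a (finite_support_smul_nord_apply c n p), smul_comm _ a, RingHom.id_apply]

lemma lie_quadOp_apply (c : ℤ → ℂ) (n : ℤ) (w : Module.End ℂ SS) (p : SS) :
    ⁅quadOp c n, w⁆ p = (1 / 2 : ℂ) • ∑ᶠ j, c j • ⁅nord j (n - j), w⁆ p := by
  have hp := finite_support_smul_nord_apply c n p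
  have hw : w (∑ᶠ j, c j • nord j (n - j) p) = ∑ᶠ j, w (c j • nord j (n - j) p) :=
    w.toAddMonoidHom.map_finsum hp
  have hwp : (Function.support fun j => w (c j • nord j (n - j) p)).Finite :=
    hp.subset (Function.support_comp_subset (map_zero w) _)
  calc
    ⁅quadOp c n, w⁆ p
      = (1 / 2 : ℂ) • ∑ᶠ j, c j • nord j (n - j) (w p) -
          w ((1 / 2 : ℂ) • ∑ᶠ j, c j • nord j (n - j) p) := rfl
    _ = (1 / 2 : ℂ) • ∑ᶠ j, (c j • nord j (n - j) (w p) - w (c j • nord j (n - j) p)) := by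
      rw [map_smul, ← smul_sub, hw,
        finsum_sub_distrib (finite_support_smul_nord_apply c n (w p)) hwp]
    _ = _ := by simp only [map_smul, ← smul_sub]; rfl

-- Only `j = -k` and `j = n + k` contribute, and the symmetry of `c` makes them equal.
lemma lie_quadOp_hOp {c : ℤ → ℂ} {n : ℤ} (hc : ∀ j, c (n - j) = c j) (k : ℤ) :
    ⁅quadOp c n, hOp k⁆ = (-(k : ℂ) * c (-k)) • hOp (n + k) := by
  refine LinearMap.ext fun p => ?_
  set q := (-(k : ℂ) * c (-k)) • hOp (n + k) p
  have hterm (j : ℤ) : c j • ⁅nord j (n - j), hOp k⁆ p =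
      (if j = -k then q else 0) + if j = n + k then q else 0 := by
    rw [lie_nord_hOp, LinearMap.add_apply, smul_add]
    congr 1
    · by_cases h : j = -k
      · subst h
        simp [q, smul_smul, mul_comm]
      · simp [h, add_eq_zero_iff_eq_neg]
    · by_cases h : j = n + k
      · subst h
        have hck : c (n + k) = c (-k) := by rw [← hc, sub_add_cancel_left]
        simp [q, smul_smul, mul_comm, hck]
      · have h' : n - j + k ≠ 0 := by omega
        simp [h, h']
  have hfin (a : ℤ) : (Function.support fun j => if j = a then q else 0).Finite :=
    (Set.finite_singleton a).subset fun j hj => by_contra fun h => hj (if_neg h)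
  have hsum (a : ℤ) : ∑ᶠ j, (if j = a then q else 0) = q :=
    (finsum_eq_single _ a fun j h => if_neg h).trans (if_pos rfl)
  rw [lie_quadOp_apply, finsum_congr hterm, finsum_add_distrib (hfin _) (hfin _), hsum, hsum,
    ← two_smul ℂ, smul_smul, one_div, inv_mul_cancel₀ two_ne_zero, one_smul]
  rfl

/-- The operator `L⁽ʳ⁾(n)`. -/
def LOp (r : ℕ) (n : ℤ) : Module.End ℂ SS :=
  quadOp (fun j => (j : ℂ) ^ r * ((n : ℂ) - j) ^ r) n

lemma lie_LOp_hOp (r : ℕ) (n k : ℤ) :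
    ⁅LOp r n, hOp k⁆ = heis (((-1 : ℂ) ^ (r + 1) • dplusGen r n) (T k)) := by
  rw [LOp, lie_quadOp_hOp (fun j => by push_cast; ring), LinearMap.smul_apply,
    dplusGen_eq_diffOp, diffOp_T, smul_smul, map_smul, heis_T]
  congr 1
  simp only [eval_mul, eval_pow, eval_add, eval_X, eval_C, mul_pow]
  push_cast
  ring

end QuadraticOperators

section Extension

attribute [local instance] LieRing.ofAssociativeRing

/-- The generators of `W`: the operators `L⁽ʳ⁾(n)`, indexed by `(r, n)`, and the identity, indexed
by `none`. -/
def wGen : Option (ℕ × ℤ) → Module.End ℂ SS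
  | none => 1
  | some (r, n) => LOp r n

/-- The space `W`, the span of the identity and the operators `L⁽ʳ⁾(n)`. -/
def W : Submodule ℂ (Module.End ℂ SS) :=
  Submodule.span ℂ (Set.range wGen)

/-- The Lie algebra of pairs `(w, d)` with `d` a differential operator on `ℂ[t, t⁻¹]` and
`[w, h(q)] = h(d q)` for all `q`, where `h` is extended linearly by `h(tᵏ) = h(k)`. It turns out
to be the graph of the projection `W → 𝒟⁺`. -/
def adGraph : LieSubalgebra ℂ (Module.End ℂ SS × Module.End ℂ ℂ[T;T⁻¹]) where
  carrier := {x | x.2 ∈ diffOps ℂ ∧ ∀ q, ⁅x.1, heis q⁆ = heis (x.2 q)}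
  zero_mem' := ⟨zero_mem _, fun q => by simp⟩
  add_mem' := fun {x y} hx hy =>
    ⟨add_mem hx.1 hy.1, fun q => by simp [add_lie, hx.2 q, hy.2 q]⟩
  smul_mem' := fun c x hx =>
    ⟨(diffOps ℂ).smul_mem hx.1 c, fun q =>
      (smul_lie c x.1 (heis q)).trans (by simp [hx.2 q])⟩
  lie_mem' := fun {x y} hx hy => by
    refine ⟨sub_mem (mul_mem hx.1 hy.1) (mul_mem hy.1 hx.1), fun q => ?_⟩
    change ⁅⁅x.1, y.1⁆, heis q⁆ = heis (⁅x.2, y.2⁆ q)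
    rw [lie_lie, hx.2, hy.2, hx.2, hy.2, ← map_sub]
    rfl

variable {w : Module.End ℂ SS} {d : Module.End ℂ ℂ[T;T⁻¹]}

lemma mem_adGraph_of_forall_lie_hOp (hd : d ∈ diffOps ℂ)
    (h : ∀ k, ⁅w, hOp k⁆ = heis (d (T k))) : (w, d) ∈ adGraph := by
  have hlin : (LieAlgebra.ad ℂ (Module.End ℂ SS) w).comp heis = heis ∘ₗ d :=
    laurent_hom_ext fun k => by simpa using h k
  exact ⟨hd, fun q => LinearMap.congr_fun hlin q⟩

lemma LOp_mem_adGraph (r : ℕ) (n : ℤ) :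
    (LOp r n, (-1 : ℂ) ^ (r + 1) • dplusGen r n) ∈ adGraph := by
  refine mem_adGraph_of_forall_lie_hOp ?_ (lie_LOp_hOp r n)
  rw [dplusGen_eq_diffOp]
  exact (diffOps ℂ).smul_mem (diffOp_mem_diffOps _ _) _

lemma mem_adGraph_zero_iff : (w, 0) ∈ adGraph ↔ ∃ c : ℂ, w = c • 1 := by
  refine ⟨fun h => eq_smul_one_of_forall_lie_hOp_eq_zero fun k => by simpa using h.2 (T k), ?_⟩
  rintro ⟨c, rfl⟩
  refine ⟨zero_mem _, fun q => LinearMap.ext fun p => ?_⟩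
  simp [Ring.lie_def]

lemma one_mem_adGraph : ((1 : Module.End ℂ SS), (0 : Module.End ℂ ℂ[T;T⁻¹])) ∈ adGraph :=
  mem_adGraph_zero_iff.mpr ⟨1, (one_smul ℂ _).symm⟩

-- Since `h(0) = 0`, the relation `h(d q) = 0` only makes `d q` constant; but a polynomial
-- coefficient of `d` vanishing at all integers but one is zero.
lemma eq_zero_of_zero_mem_adGraph (h : ((0 : Module.End ℂ SS), d) ∈ adGraph) : d = 0 := by
  obtain ⟨⟨P, rfl⟩, hd⟩ := h
  suffices P = 0 by rw [this, map_zero]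
  ext1 n
  have hP : (X + C (n : ℂ)) * P n = 0 := eq_of_forall_eval_intCast_eq fun k => by
    have h₀ : heis (diffOpSum P (T k)) = 0 := by simpa using (hd (T k)).symm
    have h₁ := lie_heis_hOp_neg (diffOpSum P (T k)) (n + k)
    rw [h₀, zero_lie, coeff_diffOpSum_T] at h₁
    have h₂ := (smul_eq_zero.mp h₁.symm).resolve_right one_ne_zero
    simpa [add_comm] using h₂
  exact (mul_eq_zero.mp hP).resolve_left (X_add_C_ne_zero _)

-- The Jacobi identity for `w`, `h(a)`, `h(b)`, whose last two have a scalar bracket.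
lemma coeff_symm_of_mem_adGraph (h : (w, d) ∈ adGraph) (a b : ℤ) :
    (b : ℂ) * (d (T a)).coeff (-b) = a * (d (T b)).coeff (-a) := by
  have hw (k : ℤ) : ⁅w, hOp k⁆ = heis (d (T k)) := heis_T k ▸ h.2 (T k)
  have hscalar : ⁅w, ⁅hOp a, hOp b⁆⁆ = 0 := by
    rw [lie_hOp]
    exact LinearMap.ext fun p => by simp [Ring.lie_def]
  have hlie (q : ℂ[T;T⁻¹]) (l : ℤ) : ⁅heis q, hOp l⁆ = ((-l : ℂ) * q.coeff (-l)) • 1 := by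
    simpa using lie_heis_hOp_neg q (-l)
  rw [leibniz_lie, hw, hw, ← lie_skew (hOp a), hlie, hlie, ← sub_eq_add_neg,
    sub_eq_zero] at hscalar
  simpa using smul_left_injective ℂ (one_ne_zero (α := Module.End ℂ SS)) hscalar

lemma mem_Dplus_of_mem_adGraph (h : (w, d) ∈ adGraph) : d ∈ Dplus ℂ := by
  obtain ⟨P, rfl⟩ := h.1
  have hP (n : ℤ) : (X + C (n : ℂ)) * P n = -(X * (P n).comp (-C (n : ℂ) - X)) :=
    eq_of_forall_eval_intCast_eq fun k => by
      have hk := coeff_symm_of_mem_adGraph h k (-n - k)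
      rw [neg_sub, sub_neg_eq_add, add_comm k, coeff_diffOpSum_T,
        show -k = n + (-n - k) by ring, coeff_diffOpSum_T] at hk
      simp only [eval_mul, eval_add, eval_neg, eval_comp, eval_sub, eval_X, eval_C]
      push_cast at hk
      linear_combination -hk
  rw [diffOpSum, Finsupp.lsum_apply]
  refine Submodule.sum_mem _ fun n _ => ?_
  have : Invertible (2 : ℂ) := invertibleOfNonzero two_ne_zero
  obtain ⟨q, hq⟩ := exists_eq_X_mul_comp (hP n)
  rw [hq]
  exact diffOp_X_mul_comp_mem_Dplus n q

lemma one_mem_W : 1 ∈ W :=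
  Submodule.subset_span ⟨none, rfl⟩

lemma LOp_mem_W (r : ℕ) (n : ℤ) : LOp r n ∈ W :=
  Submodule.subset_span ⟨some (r, n), rfl⟩

lemma exists_mem_W_mem_adGraph (hd : d ∈ Dplus ℂ) : ∃ v ∈ W, (v, d) ∈ adGraph := by
  have hle : Dplus ℂ ≤
      (adGraph.toSubmodule ⊓ W.comap (LinearMap.fst ℂ _ _)).map (LinearMap.snd ℂ _ _) := by
    refine Submodule.span_le.mpr ?_
    rintro _ ⟨r, n, rfl⟩
    have hunit : IsUnit ((-1 : ℂ) ^ (r + 1)) := isUnit_neg_one.pow _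
    refine (Submodule.smul_mem_iff_of_isUnit _ hunit).mp ?_
    exact ⟨_, ⟨LOp_mem_adGraph r n, LOp_mem_W r n⟩, rfl⟩
  obtain ⟨⟨v, _⟩, ⟨hv, hvW⟩, rfl⟩ := hle hd
  exact ⟨v, hvW, hv⟩

lemma map_fst_adGraph : adGraph.toSubmodule.map (LinearMap.fst ℂ _ _) = W := by
  apply le_antisymm
  · rintro _ ⟨⟨w, d⟩, h, rfl⟩
    obtain ⟨v, hvW, hv⟩ := exists_mem_W_mem_adGraph (mem_Dplus_of_mem_adGraph h)
    have hsub : (w - v, 0) ∈ adGraph := by simpa using sub_mem h hv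
    obtain ⟨c, hc⟩ := mem_adGraph_zero_iff.mp hsub
    change w ∈ W
    rw [← sub_add_cancel w v, hc]
    exact add_mem (W.smul_mem c one_mem_W) hvW
  · refine Submodule.span_le.mpr ?_
    rintro _ ⟨_ | ⟨r, n⟩, rfl⟩
    · exact ⟨_, one_mem_adGraph, rfl⟩
    · exact ⟨_, LOp_mem_adGraph r n, rfl⟩

lemma mul_sub_mul_mem_adGraph {v : Module.End ℂ SS} {e : Module.End ℂ ℂ[T;T⁻¹]}
    (h : (w, d) ∈ adGraph) (h' : (v, e) ∈ adGraph) :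
    (w * v - v * w, d * e - e * d) ∈ adGraph := by
  simpa only [Ring.lie_def, Prod.mk_mul_mk, Prod.mk_sub_mk] using adGraph.lie_mem h h'

lemma mul_sub_mul_mem_W {v : Module.End ℂ SS} (hw : w ∈ W) (hv : v ∈ W) :
    w * v - v * w ∈ W := by
  rw [← map_fst_adGraph] at hw hv ⊢
  obtain ⟨x, hx, rfl⟩ := hw
  obtain ⟨y, hy, rfl⟩ := hv
  exact ⟨_, mul_sub_mul_mem_adGraph hx hy, rfl⟩

lemma exists_linearMap_forall_eq_iff_mem_adGraph :
    ∃ π : W →ₗ[ℂ] Module.End ℂ ℂ[T;T⁻¹],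
      ∀ v d, π v = d ↔ ((v : Module.End ℂ SS), d) ∈ adGraph := by
  rw [← map_fst_adGraph]
  refine exists_linearMap_forall_eq_iff_mem (g := adGraph.toSubmodule) ?_
  rintro ⟨_, d⟩ h rfl
  exact eq_zero_of_zero_mem_adGraph h

end Extension

/-- The span `W` of `{L⁽ʳ⁾(n)} ∪ {id_S}` is a Lie subalgebra of `End_ℂ(S)`, and
`π(L⁽ʳ⁾(n)) = (−1)^{r+1}·Dʳ∘M_{tⁿ}∘D∘Dʳ`, `π(id_S) = 0` defines a surjective Lie algebra
homomorphism of `W` onto `𝒟⁺` with kernel `ℂ·id_S`: `W` is a one-dimensional central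
extension of `𝒟⁺`. -/
theorem W_is_central_extension_of_Dplus
    (LR : ℕ → ℤ → Module.End ℂ SS)
    (hLR : ∀ (r : ℕ) (n : ℤ) (p : SS), LR r n p
      = (1 / 2 : ℂ) •
          ∑ᶠ j : ℤ, ((j : ℂ) ^ r * ((n : ℂ) - (j : ℂ)) ^ r) • nord j (n - j) p)
    (Dop : Module.End ℂ (LaurentPolynomial ℂ))
    (hD : ∀ k : ℤ, Dop (LaurentPolynomial.T k) = (k : ℂ) • LaurentPolynomial.T k)
    (f : Option (ℕ × ℤ) → Module.End ℂ SS)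
    (hf0 : f none = 1) (hf : ∀ (r : ℕ) (n : ℤ), f (some (r, n)) = LR r n) :
    (∀ x ∈ Submodule.span ℂ (Set.range f), ∀ y ∈ Submodule.span ℂ (Set.range f),
        x * y - y * x ∈ Submodule.span ℂ (Set.range f)) ∧
    ∃ π : (Submodule.span ℂ (Set.range f)) →ₗ[ℂ] Module.End ℂ (LaurentPolynomial ℂ),
      (∀ (r : ℕ) (n : ℤ) (hn : LR r n ∈ Submodule.span ℂ (Set.range f)),
          π ⟨LR r n, hn⟩
            = ((-1 : ℂ) ^ (r + 1)) •
                (Dop ^ r * (LinearMap.mulLeft ℂ (LaurentPolynomial.T n) * Dop) * Dop ^ r)) ∧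
      (∀ h1 : (1 : Module.End ℂ SS) ∈ Submodule.span ℂ (Set.range f),
          π ⟨1, h1⟩ = 0) ∧
      (∀ (x y : Submodule.span ℂ (Set.range f))
          (hxy : ((x : Module.End ℂ SS) * y - (y : Module.End ℂ SS) * x)
              ∈ Submodule.span ℂ (Set.range f)),
          π ⟨(x : Module.End ℂ SS) * y - (y : Module.End ℂ SS) * x, hxy⟩
            = π x * π y - π y * π x) ∧
      (∀ v : Submodule.span ℂ (Set.range f),
          π v = 0 ↔ ∃ c : ℂ, (v : Module.End ℂ SS) = c • (1 : Module.End ℂ SS)) ∧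
      LinearMap.range π
        = Submodule.span ℂ
            {g : Module.End ℂ (LaurentPolynomial ℂ) | ∃ r : ℕ, ∃ n : ℤ,
              g = Dop ^ r * (LinearMap.mulLeft ℂ (LaurentPolynomial.T n) * Dop) * Dop ^ r} := by
  obtain rfl : Dop = euler ℂ := laurent_hom_ext fun k => (hD k).trans (euler_T k).symm
  obtain rfl : LR = LOp := funext₂ fun r n => LinearMap.ext (hLR r n)
  obtain rfl : f = wGen := funext fun | none => hf0 | some (r, n) => hf r n
  obtain ⟨π, hπ⟩ := exists_linearMap_forall_eq_iff_mem_adGraph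
  refine ⟨fun x hx y hy => mul_sub_mul_mem_W hx hy, π, ?_, ?_, ?_, ?_, ?_⟩
  · exact fun r n _ => (hπ _ _).mpr (LOp_mem_adGraph r n)
  · exact fun _ => (hπ _ _).mpr one_mem_adGraph
  · exact fun x y _ =>
      (hπ _ _).mpr (mul_sub_mul_mem_adGraph ((hπ x _).mp rfl) ((hπ y _).mp rfl))
  · exact fun v => (hπ v 0).trans mem_adGraph_zero_iff
  · refine le_antisymm ?_ fun d hd => ?_
    · rintro _ ⟨v, rfl⟩
      exact mem_Dplus_of_mem_adGraph ((hπ v _).mp rfl)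
    · obtain ⟨w, hw, h⟩ := exists_mem_W_mem_adGraph hd
      exact ⟨⟨w, hw⟩, (hπ _ _).mpr h⟩
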